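/- There is an absolute constant C such that for all reals X, P, Q with 3 ≤ P ≤ Q ≤ X and every integer h with 1 ≤ h ≤ X, one has ∑_{l=1}^{h} #{ n ∈ ℤ : X ≤ n ≤ 2X, neither n nor n+l has a prime factor in [P,Q] } ≤ C · h · X · ((log P)/(log Q))². -/

import Mathlib

open Finset
open scoped Classical

/-!
Fix `l` and sift the values `n (n + l)` by the primes of `[P, z]`, where `z` is a small power of
`Q`. The Selberg sieve bounds the number of `n ≤ X` left over by about `X / ∑ g(d)`, where
`g(p) ≈ 2 / p` and `d` runs over the products of these primes below a fixed power of `z`. By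
Rankin's trick this sum is of the order of the full Euler product `∏ (1 + g(p))`, hence at least
of the order of `∏_{P ≤ p ≤ z} (1 + 1 / p) ^ 2 / ∏_{p ∣ l} (1 + 1 / p)`. Mertens-type bounds make
the numerator `≫ (log Q / log P) ^ 2`, and `∏_{p ∣ l} (1 + 1 / p)` is bounded on average over `l`.
The sieve error is a power of `z` of size at most `√Q ≪ X (log P / log Q) ^ 2`.
-/

section SelbergUpperBound

open BoundingSieve ArithmeticFunction
open scoped ArithmeticFunction.Moebius

theorem sum_moebius_multiples_eq_ite {l m : ℕ} (hm : Squarefree m) :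
    ∑ d ∈ m.divisors with l ∣ d, μ d = if l = m then μ m else 0 := by
  by_cases hlm : l ∣ m
  · obtain ⟨n, rfl⟩ := hlm
    obtain ⟨hl, hn⟩ := mul_ne_zero_iff.1 hm.ne_zero
    have multiples_eq : {d ∈ (l * n).divisors | l ∣ d} = n.divisors.image (l * ·) := by
      ext d
      simp only [mem_filter, Nat.mem_divisors, mem_image]
      constructor
      · rintro ⟨⟨hd, -⟩, e, rfl⟩
        exact ⟨e, ⟨Nat.dvd_of_mul_dvd_mul_left (Nat.pos_of_ne_zero hl) hd, hn⟩, rfl⟩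
      · rintro ⟨e, ⟨he, -⟩, rfl⟩
        exact ⟨⟨Nat.mul_dvd_mul_left l he, hm.ne_zero⟩, dvd_mul_right l e⟩
    have moebius_mul : ∀ e ∈ n.divisors, μ (l * e) = μ l * μ e := fun e he =>
      isMultiplicative_moebius.map_mul_of_coprime <|
        (Nat.coprime_of_squarefree_mul hm).of_dvd_right (Nat.dvd_of_mem_divisors he)
    rw [multiples_eq, sum_image (mul_right_injective₀ hl).injOn, sum_congr rfl moebius_mul,
      ← mul_sum, ← coe_mul_zeta_apply, moebius_mul_coe_zeta, one_apply]
    by_cases hn1 : n = 1 <;> simp [hn1, hl]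
  · rw [filter_false_of_mem fun d hd hld => hlm (hld.trans (Nat.dvd_of_mem_divisors hd)),
      sum_empty, if_neg fun h : l = m => hlm h.dvd]

/-- The divisors of the sifting modulus `P` not exceeding the square root of the level: the indices
at which Selberg's weights may be nonzero. -/
noncomputable def selbergSupport (s : SelbergSieve) : Finset ℕ :=
  {d ∈ s.prodPrimes.divisors | (d : ℝ) ^ 2 ≤ s.level}

/-- The sum `∑ g(d)` of the Selberg terms `g(p) = ν(p) / (1 - ν(p))` over the Selberg support: the
saving of the Selberg sieve over the trivial bound. -/
noncomputable def selbergSum (s : SelbergSieve) : ℝ :=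
  ∑ d ∈ selbergSupport s, s.selbergTerms d

/-- Selberg's optimal weights for the `Λ²` sieve: the minimizer of the diagonalized main term
subject to the normalization at `1`. -/
noncomputable def selbergWeight (s : SelbergSieve) (d : ℕ) : ℝ :=
  μ d * (s.nu d)⁻¹ * (selbergSum s)⁻¹ * ∑ l ∈ selbergSupport s with d ∣ l, s.selbergTerms l

variable {s : SelbergSieve} {d e : ℕ}

theorem mem_selbergSupport :
    d ∈ selbergSupport s ↔ d ∣ s.prodPrimes ∧ (d : ℝ) ^ 2 ≤ s.level := by
  simp [selbergSupport, prodPrimes_ne_zero]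

theorem selbergSupport_subset_divisors : selbergSupport s ⊆ s.prodPrimes.divisors :=
  filter_subset _ _

theorem one_mem_selbergSupport : 1 ∈ selbergSupport s :=
  mem_selbergSupport.2 ⟨one_dvd _, by simpa using s.one_le_level⟩

theorem pos_of_mem_selbergSupport (hd : d ∈ selbergSupport s) : 0 < d :=
  Nat.pos_of_dvd_of_pos (mem_selbergSupport.1 hd).1 (Nat.pos_of_ne_zero prodPrimes_ne_zero)

theorem mem_selbergSupport_of_dvd (hed : e ∣ d) (hd : d ∈ selbergSupport s) :
    e ∈ selbergSupport s := by
  have hle : e ≤ d := Nat.le_of_dvd (pos_of_mem_selbergSupport hd) hed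
  rw [mem_selbergSupport] at hd ⊢
  exact ⟨hed.trans hd.1, le_trans (by gcongr) hd.2⟩

theorem selbergTerms_pos_of_mem_selbergSupport (hd : d ∈ selbergSupport s) :
    0 < s.selbergTerms d :=
  selbergTerms_pos (mem_selbergSupport.1 hd).1

theorem selbergSum_pos : 0 < selbergSum s :=
  sum_pos (fun _ => selbergTerms_pos_of_mem_selbergSupport) ⟨1, one_mem_selbergSupport⟩

theorem selbergWeight_one : selbergWeight s 1 = 1 := by
  simp only [selbergWeight, moebius_apply_one, s.nu_mult.map_one, one_dvd, filter_true]
  rw [← selbergSum]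
  simp [selbergSum_pos.ne']

theorem selbergWeight_eq_zero_of_notMem (hd : d ∉ selbergSupport s) : selbergWeight s d = 0 := by
  rw [selbergWeight, filter_false_of_mem fun l hl hdl => hd (mem_selbergSupport_of_dvd hdl hl),
    sum_empty, mul_zero]

theorem nu_inv_mul_selbergTerms_mul (hde : d * e ∣ s.prodPrimes) :
    (s.nu d)⁻¹ * s.selbergTerms (d * e) = ∑ k ∈ d.divisors, s.selbergTerms (k * e) := by
  have hd : d ∣ s.prodPrimes := (dvd_mul_right d e).trans hde
  have coprime : d.Coprime e := Nat.coprime_of_squarefree_mul (squarefree_of_dvd_prodPrimes hde)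
  calc (s.nu d)⁻¹ * s.selbergTerms (d * e)
      = s.selbergTerms d * (s.nu d)⁻¹ * s.selbergTerms e := by
        rw [selbergTerms_isMultiplicative.map_mul_of_coprime coprime]
        ring
    _ = ∑ k ∈ d.divisors, s.selbergTerms k * s.selbergTerms e := by
        rw [← sum_divisors_selbergTerms_eq_selbergTerms_mul_nu_inv hd, ← sum_filter,
          Nat.divisors_filter_dvd_of_dvd prodPrimes_ne_zero hd, sum_mul]
    _ = ∑ k ∈ d.divisors, s.selbergTerms (k * e) := sum_congr rfl fun k hk =>
        (selbergTerms_isMultiplicative.map_mul_of_coprime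
          (coprime.of_dvd_left (Nat.dvd_of_mem_divisors hk))).symm

theorem injOn_divisor_mul_div_of_squarefree (hd : d ≠ 0) :
    Set.InjOn (fun x : ℕ × ℕ => x.2 * (x.1 / d))
      {x | (d ∣ x.1 ∧ Squarefree x.1) ∧ x.2 ∣ d} := by
  have gcd_eq {l k : ℕ} (hdl : d ∣ l) (hl : Squarefree l) (hk : k ∣ d) :
      (k * (l / d)).gcd d = k := by
    have coprime : d.Coprime (l / d) :=
      Nat.coprime_of_squarefree_mul (by rwa [Nat.mul_div_cancel' hdl])
    rw [coprime.symm.gcd_mul_right_cancel k, Nat.gcd_eq_left hk]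
  rintro ⟨l, k⟩ ⟨⟨hdl, hl⟩, hk⟩ ⟨l', k'⟩ ⟨⟨hdl', hl'⟩, hk'⟩ heq
  dsimp only at hdl hl hk hdl' hl' hk' heq
  obtain rfl : k = k' := by rw [← gcd_eq hdl hl hk, ← gcd_eq hdl' hl' hk', heq]
  have hdiv : l / d = l' / d :=
    Nat.eq_of_mul_eq_mul_left (Nat.pos_of_dvd_of_pos hk (Nat.pos_of_ne_zero hd)) heq
  rw [← Nat.mul_div_cancel' hdl, ← Nat.mul_div_cancel' hdl', hdiv]

-- Expanding `g(d) / ν(d) = ∑ g(k)` over `k ∣ d` turns the left side into a sum of distinct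
-- terms `g(k * (l / d))` of `selbergSum s`.
theorem nu_inv_mul_sum_selbergTerms_multiples_le (hd : d ∣ s.prodPrimes) :
    (s.nu d)⁻¹ * ∑ l ∈ selbergSupport s with d ∣ l, s.selbergTerms l ≤ selbergSum s := by
  set T := {l ∈ selbergSupport s | d ∣ l} ×ˢ d.divisors with hT
  have mem_T {x : ℕ × ℕ} (hx : x ∈ T) : (x.1 ∈ selbergSupport s ∧ d ∣ x.1) ∧ x.2 ∣ d := by
    simp only [hT, mem_product, mem_filter, Nat.mem_divisors] at hx
    exact ⟨hx.1, hx.2.1⟩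
  have injOn : Set.InjOn (fun x : ℕ × ℕ => x.2 * (x.1 / d)) T := by
    refine Set.InjOn.mono (fun x hx => ?_)
      (injOn_divisor_mul_div_of_squarefree (ne_zero_of_dvd_ne_zero prodPrimes_ne_zero hd))
    obtain ⟨⟨hl, hdl⟩, hk⟩ := mem_T hx
    exact ⟨⟨hdl, squarefree_of_dvd_prodPrimes (mem_selbergSupport.1 hl).1⟩, hk⟩
  have image_subset : T.image (fun x : ℕ × ℕ => x.2 * (x.1 / d)) ⊆ selbergSupport s := by
    refine image_subset_iff.2 fun x hx => mem_selbergSupport_of_dvd ?_ (mem_T hx).1.1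
    conv_rhs => rw [← Nat.mul_div_cancel' (mem_T hx).1.2]
    exact Nat.mul_dvd_mul_right (mem_T hx).2 _
  calc (s.nu d)⁻¹ * ∑ l ∈ selbergSupport s with d ∣ l, s.selbergTerms l
      = ∑ l ∈ selbergSupport s with d ∣ l, ∑ k ∈ d.divisors, s.selbergTerms (k * (l / d)) := by
        rw [mul_sum]
        refine sum_congr rfl fun l hl => ?_
        obtain ⟨hl, hdl⟩ := mem_filter.1 hl
        have := Nat.mul_div_cancel' hdl
        rw [← nu_inv_mul_selbergTerms_mul (this.symm ▸ (mem_selbergSupport.1 hl).1), this]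
    _ = ∑ m ∈ T.image (fun x : ℕ × ℕ => x.2 * (x.1 / d)), s.selbergTerms m := by
        rw [sum_image injOn, sum_product]
    _ ≤ selbergSum s := sum_le_sum_of_subset_of_nonneg image_subset fun m hm _ =>
        (selbergTerms_pos_of_mem_selbergSupport hm).le

theorem abs_selbergWeight_le_one (hd : d ∣ s.prodPrimes) : |selbergWeight s d| ≤ 1 := by
  have hμ : |(μ d : ℝ)| ≤ 1 := mod_cast abs_moebius_le_one
  have hsum : 0 ≤ ∑ l ∈ selbergSupport s with d ∣ l, s.selbergTerms l :=
    sum_nonneg fun l hl => (selbergTerms_pos_of_mem_selbergSupport (mem_filter.1 hl).1).le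
  have hnu := nu_pos_of_dvd_prodPrimes hd
  have hS : 0 < selbergSum s := selbergSum_pos
  calc |selbergWeight s d|
      = |(μ d : ℝ)| * (((s.nu d)⁻¹ * ∑ l ∈ selbergSupport s with d ∣ l, s.selbergTerms l) *
          (selbergSum s)⁻¹) := by
        rw [selbergWeight, abs_mul, abs_mul, abs_mul, abs_of_nonneg hsum,
          abs_of_pos (inv_pos.2 hnu), abs_of_pos (inv_pos.2 hS)]
        ring
    _ ≤ 1 * (selbergSum s * (selbergSum s)⁻¹) := by
        gcongr
        exact nu_inv_mul_sum_selbergTerms_multiples_le hd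
    _ = 1 := by rw [one_mul, mul_inv_cancel₀ hS.ne']

theorem sum_nu_mul_selbergWeight_multiples (l : ℕ) :
    ∑ d ∈ s.prodPrimes.divisors with l ∣ d, s.nu d * selbergWeight s d =
      if l ∈ selbergSupport s then (selbergSum s)⁻¹ * (μ l * s.selbergTerms l) else 0 := by
  calc ∑ d ∈ s.prodPrimes.divisors with l ∣ d, s.nu d * selbergWeight s d
      = (selbergSum s)⁻¹ * ∑ d ∈ s.prodPrimes.divisors with l ∣ d,
          ∑ m ∈ selbergSupport s with d ∣ m, μ d * s.selbergTerms m := by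
        rw [mul_sum]
        refine sum_congr rfl fun d hd => ?_
        have := nu_ne_zero (Nat.dvd_of_mem_divisors (mem_filter.1 hd).1)
        rw [selbergWeight, ← mul_sum]
        field_simp
    _ = (selbergSum s)⁻¹ * ∑ m ∈ selbergSupport s,
          ∑ d ∈ m.divisors with l ∣ d, μ d * s.selbergTerms m := by
        congr 1
        refine sum_comm' fun d m => ?_
        simp only [mem_filter, Nat.mem_divisors]
        constructor
        · rintro ⟨⟨-, hld⟩, hm, hdm⟩
          exact ⟨⟨⟨hdm, (pos_of_mem_selbergSupport hm).ne'⟩, hld⟩, hm⟩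
        · rintro ⟨⟨⟨hdm, -⟩, hld⟩, hm⟩
          exact ⟨⟨⟨hdm.trans (mem_selbergSupport.1 hm).1, prodPrimes_ne_zero⟩, hld⟩, hm, hdm⟩
    _ = (selbergSum s)⁻¹ * ∑ m ∈ selbergSupport s,
          if l = m then μ l * s.selbergTerms l else 0 := by
        congr 1
        refine sum_congr rfl fun m hm => ?_
        rw [← sum_mul, ← Int.cast_sum, sum_moebius_multiples_eq_ite
          (squarefree_of_dvd_prodPrimes (mem_selbergSupport.1 hm).1)]
        split_ifs with h <;> simp [h]
    _ = _ := by rw [sum_ite_eq]; split_ifs <;> simp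

theorem mainSum_lambdaSquared_selbergWeight :
    s.mainSum (lambdaSquared (selbergWeight s)) = (selbergSum s)⁻¹ := by
  have sq_moebius : ∀ l ∈ selbergSupport s, (μ l : ℝ) ^ 2 = 1 := fun l hl => mod_cast
    moebius_sq_eq_one_of_squarefree (squarefree_of_dvd_prodPrimes (mem_selbergSupport.1 hl).1)
  calc s.mainSum (lambdaSquared (selbergWeight s))
      = ∑ l ∈ s.prodPrimes.divisors, if l ∈ selbergSupport s then
          (selbergSum s)⁻¹ ^ 2 * s.selbergTerms l else 0 := by
        rw [mainSum_lambdaSquared_eq_sum_mul_sum_sq]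
        refine sum_congr rfl fun l _ => ?_
        rw [← sum_filter, sum_nu_mul_selbergWeight_multiples]
        split_ifs with hl
        · rw [mul_pow, mul_pow, sq_moebius l hl]
          have := (selbergTerms_pos_of_mem_selbergSupport hl).ne'
          field_simp
        · simp
    _ = (selbergSum s)⁻¹ ^ 2 * selbergSum s := by
        rw [sum_ite_mem, inter_eq_right.2 selbergSupport_subset_divisors, ← mul_sum, ← selbergSum]
    _ = (selbergSum s)⁻¹ := by
        have := (selbergSum_pos (s := s)).ne'
        field_simp

theorem abs_lambdaSquared_selbergWeight_le (hd : d ∣ s.prodPrimes) :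
    |lambdaSquared (selbergWeight s) d| ≤
      ∑ d₁ ∈ selbergSupport s, ∑ d₂ ∈ selbergSupport s, if d = d₁.lcm d₂ then 1 else 0 := by
  have weight_mul_le {d₁ d₂ : ℕ} (h₁ : d₁ ∈ d.divisors) (h₂ : d₂ ∈ d.divisors) :
      |if d = d₁.lcm d₂ then selbergWeight s d₁ * selbergWeight s d₂ else 0| ≤
        if d₁ ∈ selbergSupport s then
          if d₂ ∈ selbergSupport s then if d = d₁.lcm d₂ then 1 else 0 else 0 else 0 := by
    have h₁' := abs_selbergWeight_le_one ((Nat.dvd_of_mem_divisors h₁).trans hd)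
    have h₂' := abs_selbergWeight_le_one ((Nat.dvd_of_mem_divisors h₂).trans hd)
    by_cases hd₁ : d₁ ∈ selbergSupport s
    · by_cases hd₂ : d₂ ∈ selbergSupport s
      · simp only [hd₁, hd₂, if_true]
        split_ifs
        · rw [abs_mul]
          exact mul_le_one₀ h₁' (abs_nonneg _) h₂'
        · simp
      · simp [hd₂, selbergWeight_eq_zero_of_notMem hd₂]
    · simp [hd₁, selbergWeight_eq_zero_of_notMem hd₁]
  have nonneg (d₁ d₂ : ℕ) : (0 : ℝ) ≤ if d = d₁.lcm d₂ then 1 else 0 := by positivity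
  calc |lambdaSquared (selbergWeight s) d|
      ≤ ∑ d₁ ∈ d.divisors, ∑ d₂ ∈ d.divisors, if d₁ ∈ selbergSupport s then
          if d₂ ∈ selbergSupport s then if d = d₁.lcm d₂ then 1 else 0 else 0 else 0 :=
        (abs_sum_le_sum_abs _ _).trans <| sum_le_sum fun d₁ h₁ =>
          (abs_sum_le_sum_abs _ _).trans <| sum_le_sum fun d₂ h₂ => weight_mul_le h₁ h₂
    _ = ∑ d₁ ∈ d.divisors ∩ selbergSupport s, ∑ d₂ ∈ d.divisors ∩ selbergSupport s,
          if d = d₁.lcm d₂ then 1 else 0 := by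
        simp_rw [← ite_sum_zero, sum_ite_mem]
    _ ≤ _ := by
        refine (sum_le_sum fun d₁ _ => sum_le_sum_of_subset_of_nonneg inter_subset_right
          fun d₂ _ _ => nonneg d₁ d₂).trans ?_
        exact sum_le_sum_of_subset_of_nonneg inter_subset_right fun d₁ _ _ =>
          sum_nonneg fun d₂ _ => nonneg d₁ d₂

theorem errSum_lambdaSquared_selbergWeight_le :
    s.errSum (lambdaSquared (selbergWeight s)) ≤
      ∑ d₁ ∈ selbergSupport s, ∑ d₂ ∈ selbergSupport s, |s.rem (d₁.lcm d₂)| :=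
  calc s.errSum (lambdaSquared (selbergWeight s))
      ≤ ∑ d ∈ s.prodPrimes.divisors, (∑ d₁ ∈ selbergSupport s, ∑ d₂ ∈ selbergSupport s,
          if d = d₁.lcm d₂ then 1 else 0) * |s.rem d| :=
        sum_le_sum fun d hd => mul_le_mul_of_nonneg_right
          (abs_lambdaSquared_selbergWeight_le (Nat.dvd_of_mem_divisors hd)) (abs_nonneg _)
    _ = ∑ d₁ ∈ selbergSupport s, ∑ d₂ ∈ selbergSupport s, ∑ d ∈ s.prodPrimes.divisors,
          if d = d₁.lcm d₂ then |s.rem d| else 0 := by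
        simp_rw [sum_mul, ite_mul, one_mul, zero_mul]
        rw [sum_comm]
        exact sum_congr rfl fun d₁ _ => sum_comm
    _ = ∑ d₁ ∈ selbergSupport s, ∑ d₂ ∈ selbergSupport s, |s.rem (d₁.lcm d₂)| := by
        refine sum_congr rfl fun d₁ h₁ => sum_congr rfl fun d₂ h₂ => ?_
        rw [sum_ite_eq_of_mem']
        exact Nat.mem_divisors.2 ⟨Nat.lcm_dvd (mem_selbergSupport.1 h₁).1
          (mem_selbergSupport.1 h₂).1, prodPrimes_ne_zero⟩

theorem siftedSum_le_totalMass_div_selbergSum_add :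
    s.siftedSum ≤ s.totalMass / selbergSum s +
      ∑ d₁ ∈ selbergSupport s, ∑ d₂ ∈ selbergSupport s, |s.rem (d₁.lcm d₂)| :=
  calc s.siftedSum
      ≤ s.totalMass * s.mainSum (lambdaSquared (selbergWeight s)) +
          s.errSum (lambdaSquared (selbergWeight s)) :=
        siftedSum_le_mainSum_errSum_of_upperMoebius _
          (upperMoebius_lambdaSquared _ selbergWeight_one)
    _ ≤ _ := by
        rw [mainSum_lambdaSquared_selbergWeight, ← div_eq_mul_inv]
        gcongr
        exact errSum_lambdaSquared_selbergWeight_le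

end SelbergUpperBound

section SelbergRemainder

open BoundingSieve

variable {s : SelbergSieve}

theorem sq_card_selbergSupport_le : ((#(selbergSupport s) : ℕ) : ℝ) ^ 2 ≤ s.level := by
  have hlevel : 0 ≤ s.level := zero_le_one.trans s.one_le_level
  have subset : selbergSupport s ⊆ Icc 1 ⌊√s.level⌋₊ := fun d hd => mem_Icc.2
    ⟨pos_of_mem_selbergSupport hd, Nat.le_floor (Real.le_sqrt_of_sq_le (mem_selbergSupport.1 hd).2)⟩
  have card_le : (#(selbergSupport s) : ℝ) ≤ √s.level :=
    (Nat.cast_le.2 (card_le_card subset)).trans <| by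
      simpa using Nat.floor_le (Real.sqrt_nonneg s.level)
  exact (Real.le_sqrt (Nat.cast_nonneg _) hlevel).1 card_le

theorem lcm_le_level {d₁ d₂ : ℕ} (hd₁ : d₁ ∈ selbergSupport s) (hd₂ : d₂ ∈ selbergSupport s) :
    (d₁.lcm d₂ : ℝ) ≤ s.level := by
  have h₁ := (mem_selbergSupport.1 hd₁).2
  have h₂ := (mem_selbergSupport.1 hd₂).2
  have lcm_le : (d₁.lcm d₂ : ℝ) ≤ d₁ * d₂ := by
    exact_mod_cast Nat.lcm_le_mul (pos_of_mem_selbergSupport hd₁) (pos_of_mem_selbergSupport hd₂)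
  nlinarith [sq_nonneg ((d₁ : ℝ) - d₂)]

theorem siftedSum_le_of_abs_rem_le (hrem : ∀ d, d ∣ s.prodPrimes → |s.rem d| ≤ d) :
    s.siftedSum ≤ s.totalMass / selbergSum s + s.level ^ 2 := by
  refine siftedSum_le_totalMass_div_selbergSum_add.trans (add_le_add_right ?_ _)
  calc ∑ d₁ ∈ selbergSupport s, ∑ d₂ ∈ selbergSupport s, |s.rem (d₁.lcm d₂)|
      ≤ ∑ _d₁ ∈ selbergSupport s, ∑ _d₂ ∈ selbergSupport s, s.level :=
        sum_le_sum fun d₁ h₁ => sum_le_sum fun d₂ h₂ =>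
          (hrem _ (Nat.lcm_dvd (mem_selbergSupport.1 h₁).1 (mem_selbergSupport.1 h₂).1)).trans
            (lcm_le_level h₁ h₂)
    _ = (#(selbergSupport s) : ℝ) ^ 2 * s.level := by
        rw [sum_const, sum_const, nsmul_eq_mul, nsmul_eq_mul]
        ring
    _ ≤ s.level * s.level := mul_le_mul_of_nonneg_right sq_card_selbergSupport_le
        (zero_le_one.trans s.one_le_level)
    _ = s.level ^ 2 := (sq _).symm

end SelbergRemainder

section ValueSieve

/-- The maps `ℕ → ℕ` compatible with all congruences, such as the polynomial maps. -/
def PreservesModEq (f : ℕ → ℕ) : Prop :=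
  ∀ ⦃d m n : ℕ⦄, m ≡ n [MOD d] → f m ≡ f n [MOD d]

/-- The number `ρ(d)` of residue classes mod `d` on which `f` vanishes mod `d`, each class being
represented by its least element. -/
def rootCount (f : ℕ → ℕ) (d : ℕ) : ℕ :=
  #{r ∈ range d | d ∣ f r}

/-- The density `ρ(d) / d` of the residue classes mod `d` on which `f` vanishes mod `d`. -/
noncomputable def rootDensity (f : ℕ → ℕ) : ArithmeticFunction ℝ :=
  ⟨fun d => rootCount f d / d, by simp⟩

variable {f : ℕ → ℕ}

theorem rootDensity_apply (d : ℕ) : rootDensity f d = rootCount f d / d := rfl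

theorem rootCount_le (d : ℕ) : rootCount f d ≤ d :=
  (card_filter_le _ _).trans_eq (card_range d)

theorem PreservesModEq.dvd_iff (hf : PreservesModEq f) {d m n : ℕ} (h : m ≡ n [MOD d]) :
    d ∣ f m ↔ d ∣ f n :=
  (hf h).dvd_iff dvd_rfl

theorem PreservesModEq.rootCount_mul (hf : PreservesModEq f) {m n : ℕ} (hmn : m.Coprime n) :
    rootCount f (m * n) = rootCount f m * rootCount f n := by
  rcases m.eq_zero_or_pos with rfl | hm
  · simp [rootCount]
  rcases n.eq_zero_or_pos with rfl | hn
  · simp [rootCount]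
  rw [rootCount, rootCount, rootCount, ← card_product]
  have dvd_iff (r : ℕ) : m * n ∣ f r ↔ m ∣ f (r % m) ∧ n ∣ f (r % n) := by
    rw [hf.dvd_iff (Nat.mod_modEq r m), hf.dvd_iff (Nat.mod_modEq r n)]
    exact ⟨fun h => ⟨dvd_of_mul_right_dvd h, dvd_of_mul_left_dvd h⟩,
      fun h => hmn.mul_dvd_of_dvd_of_dvd h.1 h.2⟩
  refine card_nbij (fun r => (r % m, r % n)) (fun r hr => ?_) (fun r hr r' hr' heq => ?_) ?_
  · simp only [coe_product, coe_filter, mem_range, Set.mem_prod, Set.mem_ofPred_eq, dvd_iff] at hr ⊢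
    exact ⟨⟨Nat.mod_lt r hm, hr.2.1⟩, Nat.mod_lt r hn, hr.2.2⟩
  · simp only [coe_filter, mem_range, Set.mem_ofPred_eq, Prod.mk.injEq] at hr hr' heq
    exact ((Nat.modEq_and_modEq_iff_modEq_mul hmn).1 heq).eq_of_lt_of_lt hr.1 hr'.1
  · rintro ⟨u, v⟩ huv
    simp only [coe_product, coe_filter, mem_range, Set.mem_prod, Set.mem_ofPred_eq] at huv
    obtain ⟨⟨hum, hu⟩, hvn, hv⟩ := huv
    have hr := (Nat.chineseRemainder hmn u v).2
    have hlt := Nat.chineseRemainder_lt_mul hmn u v hm.ne' hn.ne'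
    set r : ℕ := (Nat.chineseRemainder hmn u v).1
    have hrm : r % m = u := Eq.trans hr.1 (Nat.mod_eq_of_lt hum)
    have hrn : r % n = v := Eq.trans hr.2 (Nat.mod_eq_of_lt hvn)
    refine ⟨r, ?_, Prod.ext hrm hrn⟩
    simp only [coe_filter, mem_range, Set.mem_ofPred_eq, dvd_iff, hrm, hrn]
    exact ⟨hlt, hu, hv⟩

theorem PreservesModEq.isMultiplicative_rootDensity (hf : PreservesModEq f) :
    (rootDensity f).IsMultiplicative := by
  refine ⟨by simp [rootDensity_apply, rootCount], fun {m n} hmn => ?_⟩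
  simp only [rootDensity_apply, hf.rootCount_mul hmn, Nat.cast_mul, mul_div_mul_comm]

theorem abs_card_Ioc_modEq_sub_le {a b d : ℕ} (hab : a ≤ b) (hd : 0 < d) (r : ℕ) :
    |(#{n ∈ Ioc a b | n ≡ r [MOD d]} : ℝ) - (b - a) / d| ≤ 1 := by
  have hle : ((a : ℚ) - r) / d ≤ (b - r) / d := by gcongr
  have card_eq : (#{n ∈ Ioc a b | n ≡ r [MOD d]} : ℚ) =
      ⌊((b : ℚ) - r) / d⌋ - ⌊((a : ℚ) - r) / d⌋ := by
    have := Nat.Ioc_filter_modEq_card a b hd r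
    rw [max_eq_left (sub_nonneg.2 (Int.floor_le_floor hle))] at this
    exact_mod_cast this
  have bound : |(#{n ∈ Ioc a b | n ≡ r [MOD d]} : ℚ) - (b - a) / d| ≤ 1 := by
    have split : ((b : ℚ) - a) / d = (b - r) / d - (a - r) / d := by ring
    rw [card_eq, split, abs_le]
    constructor <;> linarith [Int.floor_le (((b : ℚ) - r) / d), Int.floor_le (((a : ℚ) - r) / d),
      Int.lt_floor_add_one (((b : ℚ) - r) / d), Int.lt_floor_add_one (((a : ℚ) - r) / d)]
  have := (Rat.cast_le (K := ℝ)).2 bound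
  push_cast at this
  exact this

theorem PreservesModEq.abs_card_Ioc_dvd_sub_le (hf : PreservesModEq f) {a b d : ℕ} (hab : a ≤ b)
    (hd : 0 < d) :
    |(#{n ∈ Ioc a b | d ∣ f n} : ℝ) - rootDensity f d * (b - a)| ≤ rootCount f d := by
  have maps : ∀ n ∈ {n ∈ Ioc a b | d ∣ f n}, n % d ∈ {r ∈ range d | d ∣ f r} := fun n hn =>
    mem_filter.2 ⟨mem_range.2 (Nat.mod_lt n hd),
      (hf.dvd_iff (Nat.mod_modEq n d)).2 (mem_filter.1 hn).2⟩
  have fiber_eq : ∀ r ∈ {r ∈ range d | d ∣ f r},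
      {n ∈ {n ∈ Ioc a b | d ∣ f n} | n % d = r} = {n ∈ Ioc a b | n ≡ r [MOD d]} := by
    intro r hr
    obtain ⟨hrd, hr⟩ := mem_filter.1 hr
    have modEq_iff (n : ℕ) : n % d = r ↔ n ≡ r [MOD d] := by
      rw [Nat.ModEq, Nat.mod_eq_of_lt (mem_range.1 hrd)]
    ext n
    simp only [mem_filter, modEq_iff]
    exact ⟨fun h => ⟨h.1.1, h.2⟩, fun h => ⟨⟨h.1, (hf.dvd_iff h.2).2 hr⟩, h.2⟩⟩
  rw [card_eq_sum_card_fiberwise maps, sum_congr rfl fun r hr => congrArg card (fiber_eq r hr)]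
  calc |((∑ r ∈ range d with d ∣ f r, #{n ∈ Ioc a b | n ≡ r [MOD d]} : ℕ) : ℝ) -
        rootDensity f d * (b - a)|
      = |∑ r ∈ range d with d ∣ f r, ((#{n ∈ Ioc a b | n ≡ r [MOD d]} : ℝ) - (b - a) / d)| := by
        rw [sum_sub_distrib, sum_const, nsmul_eq_mul, ← rootCount, rootDensity_apply]
        push_cast
        ring_nf
    _ ≤ ∑ r ∈ range d with d ∣ f r, 1 := (abs_sum_le_sum_abs _ _).trans <|
        sum_le_sum fun r _ => abs_card_Ioc_modEq_sub_le hab hd r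
    _ = rootCount f d := by simp [rootCount]

/-- The Selberg sieve of level `y` for the values of `f` on `(a, b]`, a value being weighted by the
number of times it is taken. -/
noncomputable def valueSieve (hf : PreservesModEq f) {P : ℕ} (hP : Squarefree P)
    (hroot : ∀ p, p.Prime → p ∣ P → 0 < rootCount f p ∧ rootCount f p < p) (a b : ℕ)
    {y : ℝ} (hy : 1 ≤ y) : SelbergSieve where
  support := (Ioc a b).image f
  prodPrimes := P
  prodPrimes_squarefree := hP
  weights m := #{n ∈ Ioc a b | f n = m}
  weights_nonneg _ := Nat.cast_nonneg _
  totalMass := b - a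
  nu := rootDensity f
  nu_mult := hf.isMultiplicative_rootDensity
  nu_pos_of_prime p hp hpP :=
    div_pos (Nat.cast_pos.2 (hroot p hp hpP).1) (Nat.cast_pos.2 hp.pos)
  nu_lt_one_of_prime p hp hpP :=
    (div_lt_one (Nat.cast_pos.2 hp.pos)).2 (Nat.cast_lt.2 (hroot p hp hpP).2)
  level := y
  one_le_level := hy

theorem sum_image_card_fiber_ite (t : Finset ℕ) (q : ℕ → Prop) [DecidablePred q] :
    ∑ m ∈ t.image f, (if q m then (#{n ∈ t | f n = m} : ℝ) else 0) = #{n ∈ t | q (f n)} := by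
  rw [← sum_boole, sum_comp (fun m => if q m then (1 : ℝ) else 0) f]
  simp

theorem PreservesModEq.card_Ioc_coprime_le (hf : PreservesModEq f) {P : ℕ} (hP : Squarefree P)
    (hroot : ∀ p, p.Prime → p ∣ P → 0 < rootCount f p ∧ rootCount f p < p) {a b : ℕ} (hab : a ≤ b)
    {y : ℝ} (hy : 1 ≤ y) :
    (#{n ∈ Ioc a b | P.Coprime (f n)} : ℝ) ≤
      (b - a) / selbergSum (valueSieve hf hP hroot a b hy) + y ^ 2 := by
  have abs_rem_le (d : ℕ) (hd : d ∣ P) : |(valueSieve hf hP hroot a b hy).rem d| ≤ d := by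
    have hd0 : 0 < d := Nat.pos_of_dvd_of_pos hd (Nat.pos_of_ne_zero hP.ne_zero)
    have hrem := hf.abs_card_Ioc_dvd_sub_le hab hd0
    rw [← sum_image_card_fiber_ite] at hrem
    exact hrem.trans (Nat.cast_le.2 (rootCount_le d))
  rw [← sum_image_card_fiber_ite]
  exact siftedSum_le_of_abs_rem_le (s := valueSieve hf hP hroot a b hy) abs_rem_le

end ValueSieve

section PrimeSums

theorem sum_log_div_primesLE_le (n : ℕ) :
    ∑ p ∈ n.primesLE, Real.log p / p ≤ Real.log n + Real.log 4 := by
  rcases n.eq_zero_or_pos with rfl | hn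
  · simpa using Real.log_nonneg (by norm_num : (1 : ℝ) ≤ 4)
  have div_le_factorization {p : ℕ} (hp : p ∈ n.primesLE) :
      n / p ≤ n.factorial.factorization p := by
    rw [Nat.factorization_factorial (Nat.mem_primesLE.1 hp).2 (Nat.lt_succ_self (Nat.log p n))]
    have hlog : 1 ≤ Nat.log p n :=
      Nat.log_pos (Nat.mem_primesLE.1 hp).2.one_lt (Nat.mem_primesLE.1 hp).1
    simpa using single_le_sum (f := fun i => n / p ^ i) (fun _ _ => Nat.zero_le _)
      (mem_Ico.2 ⟨le_rfl, Nat.lt_succ_of_le hlog⟩)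
  have log_factorial : Real.log (n.factorial : ℕ) =
      ∑ p ∈ n.primesLE, (n.factorial.factorization p : ℝ) * Real.log p := by
    rw [Real.log_nat_eq_sum_factorization]
    refine Finsupp.sum_of_support_subset _ (fun p hp => ?_) _ (by simp)
    have hp' := Nat.prime_of_mem_primeFactors hp
    exact Nat.mem_primesLE.2 ⟨(hp'.dvd_factorial).1 (Nat.dvd_of_mem_primeFactors hp), hp'⟩
  have key : n * ∑ p ∈ n.primesLE, Real.log p / p ≤ n * (Real.log n + Real.log 4) :=
    calc n * ∑ p ∈ n.primesLE, Real.log p / p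
        = ∑ p ∈ n.primesLE, (n / p : ℝ) * Real.log p := by
          rw [mul_sum]
          exact sum_congr rfl fun p _ => by ring
      _ ≤ ∑ p ∈ n.primesLE, ((n.factorial.factorization p : ℝ) + 1) * Real.log p := by
          refine sum_le_sum fun p hp =>
            mul_le_mul_of_nonneg_right ?_ (Real.log_natCast_nonneg p)
          have hdiv : ((n / p : ℕ) : ℝ) ≤ n.factorial.factorization p :=
            Nat.cast_le.2 (div_le_factorization hp)
          rw [← Nat.floor_div_eq_div (K := ℝ)] at hdiv
          exact (Nat.lt_floor_add_one _).le.trans (add_le_add_left hdiv 1)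
      _ = Real.log (n.factorial : ℕ) + Chebyshev.theta n := by
          simp_rw [add_mul, one_mul, sum_add_distrib, log_factorial,
            Chebyshev.theta_eq_sum_primesLE_log]
      _ ≤ n * Real.log n + Real.log 4 * n := by
          refine add_le_add ?_ (Chebyshev.theta_le_log4_mul_x (Nat.cast_nonneg n))
          rw [← Real.log_pow, ← Nat.cast_pow]
          exact Real.log_le_log (mod_cast n.factorial_pos) (mod_cast n.factorial_le_pow)
      _ = n * (Real.log n + Real.log 4) := by ring
  exact le_of_mul_le_mul_left key (Nat.cast_pos.2 hn)

theorem sum_log_div_prime_le {S : Finset ℕ} {z : ℝ} (hz : 2 ≤ z)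
    (hS : ∀ p ∈ S, p.Prime ∧ (p : ℝ) ≤ z) :
    ∑ p ∈ S, Real.log p / p ≤ 3 * Real.log z := by
  have hz0 : 0 ≤ z := by linarith
  have subset : S ⊆ ⌊z⌋₊.primesLE := fun p hp =>
    Nat.mem_primesLE.2 ⟨Nat.le_floor (hS p hp).2, (hS p hp).1⟩
  have log_floor_le : Real.log ⌊z⌋₊ ≤ Real.log z :=
    Real.log_le_log (Nat.cast_pos.2 (Nat.floor_pos.2 (by linarith))) (Nat.floor_le hz0)
  have log_four_le : Real.log 4 ≤ 2 * Real.log z := by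
    rw [show (4 : ℝ) = 2 ^ 2 by norm_num, Real.log_pow]
    gcongr
    norm_num
  calc ∑ p ∈ S, Real.log p / p
      ≤ ∑ p ∈ ⌊z⌋₊.primesLE, Real.log p / p :=
        sum_le_sum_of_subset_of_nonneg subset fun p _ _ =>
          div_nonneg (Real.log_natCast_nonneg p) (Nat.cast_nonneg p)
    _ ≤ 3 * Real.log z := by linarith [sum_log_div_primesLE_le ⌊z⌋₊]

end PrimeSums

section Rankin

open ArithmeticFunction

theorem one_add_mul_rpow_inv_log_le {p z t κ : ℝ} (hp : 1 ≤ p) (hpz : p ≤ z) (hz : 1 < z)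
    (ht : 0 ≤ t) (htκ : t ≤ κ / p) :
    1 + t * p ^ (Real.log z)⁻¹ ≤
      (1 + t) * Real.exp (2 * κ / Real.log z * (Real.log p / p)) := by
  have hlogz : 0 < Real.log z := Real.log_pos hz
  have hlogp : 0 ≤ Real.log p := Real.log_nonneg hp
  have ratio_le_one : Real.log p / Real.log z ≤ 1 :=
    (div_le_one hlogz).2 (Real.log_le_log (by linarith) hpz)
  have ratio_nonneg : 0 ≤ Real.log p / Real.log z := by positivity
  have rpow_sub_one : |p ^ (Real.log z)⁻¹ - 1| ≤ 2 * (Real.log p / Real.log z) := by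
    rw [Real.rpow_def_of_pos (by linarith), ← div_eq_mul_inv]
    simpa only [abs_of_nonneg ratio_nonneg] using
      Real.abs_exp_sub_one_le ((abs_of_nonneg ratio_nonneg).trans_le ratio_le_one)
  have bound : t * (2 * (Real.log p / Real.log z)) ≤
      2 * κ / Real.log z * (Real.log p / p) :=
    calc t * (2 * (Real.log p / Real.log z))
        ≤ κ / p * (2 * (Real.log p / Real.log z)) := by gcongr
      _ = 2 * κ / Real.log z * (Real.log p / p) := by ring
  have hle := mul_le_mul_of_nonneg_left ((le_abs_self _).trans rpow_sub_one) ht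
  have nonneg : 0 ≤ t * (2 * (Real.log p / Real.log z)) := by positivity
  calc 1 + t * p ^ (Real.log z)⁻¹
      ≤ (1 + t) * (1 + t * (2 * (Real.log p / Real.log z))) := by nlinarith
    _ ≤ (1 + t) * Real.exp (2 * κ / Real.log z * (Real.log p / p)) := by
        gcongr
        rw [add_comm]
        exact (Real.add_one_le_exp _).trans (Real.exp_le_exp.2 bound)

theorem prod_one_add_mul_rpow_inv_log_le {S : Finset ℕ} {z : ℝ} (hz : 2 ≤ z)
    (hS : ∀ p ∈ S, p.Prime ∧ (p : ℝ) ≤ z) {t : ℕ → ℝ} {κ : ℕ} (ht : ∀ p ∈ S, 0 ≤ t p)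
    (htκ : ∀ p ∈ S, t p ≤ κ / p) :
    ∏ p ∈ S, (1 + t p * (p : ℝ) ^ (Real.log z)⁻¹) ≤
      Real.exp (6 * κ) * ∏ p ∈ S, (1 + t p) := by
  have hlogz : 0 < Real.log z := Real.log_pos (by linarith)
  calc ∏ p ∈ S, (1 + t p * (p : ℝ) ^ (Real.log z)⁻¹)
      ≤ ∏ p ∈ S, (1 + t p) * Real.exp (2 * κ / Real.log z * (Real.log p / p)) :=
        prod_le_prod
          (fun p hp => add_nonneg zero_le_one (mul_nonneg (ht p hp) (by positivity)))
          fun p hp => one_add_mul_rpow_inv_log_le (mod_cast (hS p hp).1.one_le) (hS p hp).2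
            (by linarith) (ht p hp) (htκ p hp)
    _ = Real.exp (2 * κ / Real.log z * ∑ p ∈ S, Real.log p / p) * ∏ p ∈ S, (1 + t p) := by
        rw [prod_mul_distrib, ← Real.exp_sum, ← mul_sum, mul_comm]
    _ ≤ Real.exp (2 * κ / Real.log z * (3 * Real.log z)) * ∏ p ∈ S, (1 + t p) := by
        gcongr
        · exact prod_nonneg fun p hp => add_nonneg zero_le_one (ht p hp)
        · exact sum_log_div_prime_le hz hS
    _ = Real.exp (6 * κ) * ∏ p ∈ S, (1 + t p) := by
        congr 2
        field_simp
        ring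

theorem sum_divisors_gt_pow_le {g : ℕ → ℝ} {P K : ℕ} {z : ℝ} (hz : 1 < z)
    (hg : ∀ d ∈ P.divisors, 0 ≤ g d) :
    ∑ d ∈ P.divisors with ¬((d : ℕ) : ℝ) ≤ z ^ K, g d ≤
      Real.exp (-K) * ∑ d ∈ P.divisors, g d * (d : ℝ) ^ (Real.log z)⁻¹ := by
  have one_le {d : ℕ} (hd : ¬(d : ℝ) ≤ z ^ K) :
      1 ≤ Real.exp (-K) * (d : ℝ) ^ (Real.log z)⁻¹ := by
    have hzK : 0 < z ^ K := by positivity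
    have hlogz : 0 < Real.log z := Real.log_pos hz
    calc (1 : ℝ) = Real.exp (-K) * (z ^ K) ^ (Real.log z)⁻¹ := by
          rw [Real.rpow_def_of_pos hzK, Real.log_pow, mul_inv_cancel_right₀ hlogz.ne',
            ← Real.exp_add, neg_add_cancel, Real.exp_zero]
      _ ≤ Real.exp (-K) * (d : ℝ) ^ (Real.log z)⁻¹ := by
          gcongr
          exact (not_le.1 hd).le
  rw [mul_sum]
  calc ∑ d ∈ P.divisors with ¬((d : ℕ) : ℝ) ≤ z ^ K, g d
      ≤ ∑ d ∈ P.divisors with ¬((d : ℕ) : ℝ) ≤ z ^ K,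
          Real.exp (-K) * (g d * (d : ℝ) ^ (Real.log z)⁻¹) :=
        sum_le_sum fun d hd => by
          have := mul_le_mul_of_nonneg_left (one_le (mem_filter.1 hd).2)
            (hg d (mem_filter.1 hd).1)
          linarith
    _ ≤ ∑ d ∈ P.divisors, Real.exp (-K) * (g d * (d : ℝ) ^ (Real.log z)⁻¹) :=
        sum_le_sum_of_subset_of_nonneg (filter_subset _ _) fun d hd _ => by
        have := hg d hd
        positivity

theorem nonneg_of_dvd_squarefree {g : ArithmeticFunction ℝ} (hg : g.IsMultiplicative) {P d : ℕ}
    (hP : Squarefree P) (hg0 : ∀ p ∈ P.primeFactors, 0 ≤ g p) (hd : d ∣ P) : 0 ≤ g d := by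
  rw [← Nat.prod_primeFactors_of_squarefree (hP.squarefree_of_dvd hd),
    hg.map_prod_of_subset_primeFactors _ _ subset_rfl]
  exact prod_nonneg fun p hp => hg0 p (Nat.primeFactors_mono hd hP.ne_zero hp)

theorem sum_divisors_mul_rpow_eq_prod {g : ArithmeticFunction ℝ} (hg : g.IsMultiplicative) {P : ℕ}
    (hP : Squarefree P) (σ : ℝ) :
    ∑ d ∈ P.divisors, g d * (d : ℝ) ^ σ = ∏ p ∈ P.primeFactors, (1 + g p * (p : ℝ) ^ σ) := by
  let twist : ArithmeticFunction ℝ := ⟨fun d => g d * (d : ℝ) ^ σ, by simp⟩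
  have twist_mult : twist.IsMultiplicative := by
    refine ⟨by simp [twist, hg.map_one], fun {m n} hmn => ?_⟩
    simp only [twist, coe_mk, hg.map_mul_of_coprime hmn, Nat.cast_mul,
      Real.mul_rpow (Nat.cast_nonneg m) (Nat.cast_nonneg n)]
    ring
  exact (twist_mult.prodPrimeFactors_one_add_of_squarefree hP).symm

-- Rankin's trick: a divisor `d > z ^ K` is charged `d ^ (1 / log z) ≥ exp K`, while this twist
-- increases the full product over the primes up to `z` by a bounded factor only.
theorem sum_divisors_gt_pow_le_half_prod {g : ArithmeticFunction ℝ}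
    (hg : g.IsMultiplicative) {P : ℕ} (hP : Squarefree P) {z : ℝ} (hz : 2 ≤ z)
    (hPz : ∀ p ∈ P.primeFactors, (p : ℝ) ≤ z) {κ : ℕ} (hg0 : ∀ p ∈ P.primeFactors, 0 ≤ g p)
    (hgκ : ∀ p ∈ P.primeFactors, g p ≤ κ / p) :
    ∑ d ∈ P.divisors with ¬((d : ℕ) : ℝ) ≤ z ^ (6 * κ + 1), g d ≤
      (∏ p ∈ P.primeFactors, (1 + g p)) / 2 :=
  calc ∑ d ∈ P.divisors with ¬((d : ℕ) : ℝ) ≤ z ^ (6 * κ + 1), g d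
      ≤ Real.exp (-(6 * κ + 1 : ℕ)) * ∑ d ∈ P.divisors, g d * (d : ℝ) ^ (Real.log z)⁻¹ :=
        sum_divisors_gt_pow_le (by linarith) fun d hd =>
          nonneg_of_dvd_squarefree hg hP hg0 (Nat.dvd_of_mem_divisors hd)
    _ = Real.exp (-(6 * κ + 1 : ℕ)) *
          ∏ p ∈ P.primeFactors, (1 + g p * (p : ℝ) ^ (Real.log z)⁻¹) := by
        rw [sum_divisors_mul_rpow_eq_prod hg hP]
    _ ≤ Real.exp (-(6 * κ + 1 : ℕ)) *
          (Real.exp (6 * κ) * ∏ p ∈ P.primeFactors, (1 + g p)) := by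
        gcongr
        exact prod_one_add_mul_rpow_inv_log_le hz
          (fun p hp => ⟨Nat.prime_of_mem_primeFactors hp, hPz p hp⟩) hg0 hgκ
    _ = Real.exp (-1) * ∏ p ∈ P.primeFactors, (1 + g p) := by
        rw [← mul_assoc, ← Real.exp_add]
        push_cast
        ring_nf
    _ ≤ (∏ p ∈ P.primeFactors, (1 + g p)) / 2 := by
        rw [div_eq_inv_mul, Real.exp_neg]
        gcongr
        · exact prod_nonneg fun p hp => add_nonneg zero_le_one (hg0 p hp)
        · linarith [Real.add_one_le_exp (1 : ℝ)]

theorem half_prod_one_add_le_sum_divisors_le_pow {g : ArithmeticFunction ℝ}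
    (hg : g.IsMultiplicative) {P : ℕ} (hP : Squarefree P) {z : ℝ} (hz : 2 ≤ z)
    (hPz : ∀ p ∈ P.primeFactors, (p : ℝ) ≤ z) {κ : ℕ} (hg0 : ∀ p ∈ P.primeFactors, 0 ≤ g p)
    (hgκ : ∀ p ∈ P.primeFactors, g p ≤ κ / p) :
    (∏ p ∈ P.primeFactors, (1 + g p)) / 2 ≤
      ∑ d ∈ P.divisors with ((d : ℕ) : ℝ) ≤ z ^ (6 * κ + 1), g d := by
  have tail_le := sum_divisors_gt_pow_le_half_prod hg hP hz hPz hg0 hgκ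
  have split := sum_filter_add_sum_filter_not P.divisors (fun d : ℕ => (d : ℝ) ≤ z ^ (6 * κ + 1)) g
  rw [← hg.prodPrimeFactors_one_add_of_squarefree hP] at split
  linarith

end Rankin

section PrimeProducts

open ArithmeticFunction UniqueFactorizationMonoid
open scoped ArithmeticFunction.zeta

/-- The reciprocal `n ↦ 1 / n` as an arithmetic function, so that products of `1 + 1 / p` expand
into divisor sums. -/
noncomputable def natInv : ArithmeticFunction ℝ :=
  ⟨fun n => (n : ℝ)⁻¹, by simp⟩

theorem natInv_apply (n : ℕ) : natInv n = (n : ℝ)⁻¹ := rfl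

theorem natInv_nonneg (n : ℕ) : 0 ≤ natInv n := by
  rw [natInv_apply]
  positivity

theorem isMultiplicative_natInv : natInv.IsMultiplicative :=
  ⟨by simp [natInv_apply], fun {m n} _ => by simp only [natInv_apply, Nat.cast_mul, mul_inv]⟩

theorem prod_primeFactors_one_add_inv {n : ℕ} (hn : Squarefree n) :
    ∏ p ∈ n.primeFactors, (1 + (p : ℝ)⁻¹) = ∑ d ∈ n.divisors, (d : ℝ)⁻¹ :=
  isMultiplicative_natInv.prodPrimeFactors_one_add_of_squarefree hn

theorem prod_primesLE_one_add_inv_le {n : ℕ} (hn : 2 ≤ n) :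
    ∏ p ∈ n.primesLE, (1 + (p : ℝ)⁻¹) ≤ 17 * Real.log n := by
  have rankin := half_prod_one_add_le_sum_divisors_le_pow (z := n) (κ := 1)
    isMultiplicative_natInv (squarefree_primorial n) (mod_cast hn)
    (fun p hp => by
      rw [primeFactors_primorial] at hp
      exact_mod_cast (Nat.mem_primesLE.1 hp).1)
    (fun p _ => natInv_nonneg p) (fun p _ => by simp [natInv_apply])
  have sum_le : ∑ d ∈ (primorial n).divisors with ((d : ℕ) : ℝ) ≤ (n : ℝ) ^ 7, natInv d ≤
      1 + 7 * Real.log n :=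
    calc _ ≤ ∑ d ∈ Icc 1 (n ^ 7), natInv d := by
          refine sum_le_sum_of_subset_of_nonneg (fun d hd => ?_) fun d _ _ => natInv_nonneg d
          obtain ⟨hd, hdn⟩ := mem_filter.1 hd
          exact mem_Icc.2 ⟨Nat.pos_of_mem_divisors hd, mod_cast hdn⟩
      _ = harmonic (n ^ 7) := by
          rw [harmonic_eq_sum_Icc]
          push_cast
          rfl
      _ ≤ 1 + Real.log (n ^ 7 : ℕ) := harmonic_le_one_add_log _
      _ = 1 + 7 * Real.log n := by
          rw [Nat.cast_pow, Real.log_pow]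
          norm_cast
  have log_two_le : Real.log 2 ≤ Real.log n := Real.log_le_log two_pos (mod_cast hn)
  have log_two_gt := Real.log_two_gt_d9
  rw [primeFactors_primorial] at rankin
  simp only [natInv_apply] at rankin sum_le
  norm_num at rankin sum_le
  linarith

theorem Icc_subset_image_sq_mul_divisors_primorial (n : ℕ) :
    Icc 1 n ⊆ ((primorial n).divisors ×ˢ Ioo 0 (n + 1)).image fun x : ℕ × ℕ => x.2 ^ 2 * x.1 := by
  intro m hm
  obtain ⟨hm1, hmn⟩ := mem_Icc.1 hm
  obtain ⟨a, b, ha, hb, hab, ha_squarefree⟩ := Nat.sq_mul_squarefree_of_pos hm1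
  have ha_le : a ≤ n :=
    (Nat.le_mul_of_pos_left a (by positivity)).trans (hab.trans_le hmn)
  have hb_le : b ≤ n := by nlinarith
  have ha_dvd : a ∣ primorial n := by
    rw [← Nat.prod_primeFactors_of_squarefree ha_squarefree,
      ← Nat.prod_primeFactors_of_squarefree (squarefree_primorial n), primeFactors_primorial]
    exact prod_dvd_prod_of_subset _ _ _ fun p hp => Nat.mem_primesLE.2
      ⟨(Nat.le_of_mem_primeFactors hp).trans ha_le, Nat.prime_of_mem_primeFactors hp⟩
  exact mem_image.2 ⟨(a, b), mem_product.2 ⟨Nat.mem_divisors.2 ⟨ha_dvd, (primorial_pos n).ne'⟩,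
    mem_Ioo.2 ⟨hb, Nat.lt_succ_of_le hb_le⟩⟩, hab⟩

theorem log_add_one_le_prod_primesLE (n : ℕ) :
    Real.log (n + 1) ≤ 2 * ∏ p ∈ n.primesLE, (1 + (p : ℝ)⁻¹) :=
  calc Real.log (n + 1)
      ≤ ∑ m ∈ Icc 1 n, (m : ℝ)⁻¹ := by
        have log_le := log_add_one_le_harmonic n
        rw [harmonic_eq_sum_Icc] at log_le
        push_cast at log_le
        exact log_le
    _ ≤ ∑ m ∈ ((primorial n).divisors ×ˢ Ioo 0 (n + 1)).image
          (fun x : ℕ × ℕ => x.2 ^ 2 * x.1), ((m : ℕ) : ℝ)⁻¹ :=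
        sum_le_sum_of_subset_of_nonneg
          (Icc_subset_image_sq_mul_divisors_primorial n) fun m _ _ => by positivity
    _ ≤ ∑ x ∈ (primorial n).divisors ×ˢ Ioo 0 (n + 1), ((x.2 ^ 2 * x.1 : ℕ) : ℝ)⁻¹ :=
        sum_image_le_of_nonneg (f := fun m : ℕ => (m : ℝ)⁻¹) fun m _ => by positivity
    _ = (∑ b ∈ Ioo 0 (n + 1), ((b : ℝ) ^ 2)⁻¹) * ∏ p ∈ n.primesLE, (1 + (p : ℝ)⁻¹) := by
        rw [← primeFactors_primorial, prod_primeFactors_one_add_inv (squarefree_primorial n),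
          sum_product_right, sum_mul_sum]
        push_cast
        simp only [mul_inv]
    _ ≤ 2 * ∏ p ∈ n.primesLE, (1 + (p : ℝ)⁻¹) := by
        gcongr
        simpa using sum_Ioo_inv_sq_le (α := ℝ) 0 (n + 1)

theorem log_le_mul_log_mul_prod_primes_ge {P : ℝ} (hP : 2 ≤ P) {z : ℝ} (hz : 0 < z) :
    Real.log z ≤
      34 * Real.log P * ∏ p ∈ ⌊z⌋₊.primesLE with P ≤ ((p : ℕ) : ℝ), (1 + (p : ℝ)⁻¹) := by
  have one_le (p : ℕ) : (1 : ℝ) ≤ 1 + (p : ℝ)⁻¹ := le_add_of_nonneg_right (by positivity)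
  have small_subset : {p ∈ ⌊z⌋₊.primesLE | ¬P ≤ ((p : ℕ) : ℝ)} ⊆ ⌊P⌋₊.primesLE := fun p hp => by
    obtain ⟨hpz, hpP⟩ := mem_filter.1 hp
    exact Nat.mem_primesLE.2 ⟨Nat.le_floor (not_le.1 hpP).le, (Nat.mem_primesLE.1 hpz).2⟩
  have prod_small_le : ∏ p ∈ ⌊z⌋₊.primesLE with ¬P ≤ ((p : ℕ) : ℝ), (1 + (p : ℝ)⁻¹) ≤
      17 * Real.log P :=
    calc _ ≤ ∏ p ∈ ⌊P⌋₊.primesLE, (1 + (p : ℝ)⁻¹) :=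
          prod_le_prod_of_subset_of_one_le small_subset
            (fun p _ => zero_le_one.trans (one_le p)) fun p _ _ => one_le p
      _ ≤ 17 * Real.log ⌊P⌋₊ := prod_primesLE_one_add_inv_le (Nat.le_floor (mod_cast hP))
      _ ≤ 17 * Real.log P := by
          gcongr
          · exact Nat.cast_pos.2 (Nat.floor_pos.2 (by linarith))
          · exact Nat.floor_le (by linarith)
  calc Real.log z
      ≤ Real.log (⌊z⌋₊ + 1) := Real.log_le_log hz (Nat.lt_floor_add_one z).le
    _ ≤ 2 * ∏ p ∈ ⌊z⌋₊.primesLE, (1 + (p : ℝ)⁻¹) := log_add_one_le_prod_primesLE _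
    _ = 2 * ((∏ p ∈ ⌊z⌋₊.primesLE with P ≤ ((p : ℕ) : ℝ), (1 + (p : ℝ)⁻¹)) *
          ∏ p ∈ ⌊z⌋₊.primesLE with ¬P ≤ ((p : ℕ) : ℝ), (1 + (p : ℝ)⁻¹)) := by
        rw [prod_filter_mul_prod_filter_not]
    _ ≤ 2 * ((∏ p ∈ ⌊z⌋₊.primesLE with P ≤ ((p : ℕ) : ℝ), (1 + (p : ℝ)⁻¹)) *
          (17 * Real.log P)) := by
        gcongr
    _ = 34 * Real.log P *
          ∏ p ∈ ⌊z⌋₊.primesLE with P ≤ ((p : ℕ) : ℝ), (1 + (p : ℝ)⁻¹) := by ring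

theorem prod_primeFactors_one_add_inv_le {n : ℕ} (hn : n ≠ 0) :
    ∏ p ∈ n.primeFactors, (1 + (p : ℝ)⁻¹) ≤ (natInv * ζ) n := by
  rw [← Nat.primeFactors_radical, prod_primeFactors_one_add_inv squarefree_radical,
    coe_mul_zeta_apply]
  exact sum_le_sum_of_subset_of_nonneg
    (Nat.divisors_subset_of_dvd hn radical_dvd_self) fun d _ _ => natInv_nonneg d

theorem sum_prod_primeFactors_one_add_inv_le (h : ℕ) :
    ∑ n ∈ Icc 1 h, ∏ p ∈ n.primeFactors, (1 + (p : ℝ)⁻¹) ≤ 2 * h :=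
  calc ∑ n ∈ Icc 1 h, ∏ p ∈ n.primeFactors, (1 + (p : ℝ)⁻¹)
      ≤ ∑ n ∈ Ioc 0 h, (natInv * ζ) n :=
        sum_le_sum fun n hn => prod_primeFactors_one_add_inv_le (mem_Ioc.1 hn).1.ne'
    _ = ∑ d ∈ Ioc 0 h, (d : ℝ)⁻¹ * (h / d : ℕ) := sum_Ioc_mul_zeta_eq_sum _ _
    _ ≤ ∑ d ∈ Ioo 0 (h + 1), ((d : ℝ) ^ 2)⁻¹ * h := by
        refine sum_le_sum fun d _ => ?_
        calc (d : ℝ)⁻¹ * (h / d : ℕ) ≤ (d : ℝ)⁻¹ * (h / d) := by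
              gcongr
              exact Nat.cast_div_le
          _ = ((d : ℝ) ^ 2)⁻¹ * h := by ring
    _ ≤ 2 * h := by
        rw [← sum_mul]
        gcongr
        simpa using sum_Ioo_inv_sq_le (α := ℝ) 0 (h + 1)

end PrimeProducts

section SelbergSumLowerBound

open BoundingSieve

variable {s : SelbergSieve}

theorem one_add_selbergTerms_of_prime {p : ℕ} (hp : p.Prime) (hps : p ∣ s.prodPrimes) :
    1 + s.selbergTerms p = (1 - s.nu p)⁻¹ := by
  have hne : 1 - s.nu p ≠ 0 := (sub_pos.2 (s.nu_lt_one_of_prime p hp hps)).ne'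
  rw [selbergTerms_apply, hp.primeFactors, prod_singleton]
  field_simp
  ring

theorem half_prod_inv_one_sub_nu_le_selbergSum {z : ℝ} (hz : 2 ≤ z)
    (hsz : ∀ p ∈ s.prodPrimes.primeFactors, (p : ℝ) ≤ z) {κ : ℕ}
    (hκ : ∀ p ∈ s.prodPrimes.primeFactors, (1 - s.nu p)⁻¹ ≤ 1 + κ / p)
    (hlevel : (z ^ (6 * κ + 1)) ^ 2 ≤ s.level) :
    (∏ p ∈ s.prodPrimes.primeFactors, (1 - s.nu p)⁻¹) / 2 ≤ selbergSum s := by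
  have one_add_eq (p : ℕ) (hp : p ∈ s.prodPrimes.primeFactors) :
      1 + s.selbergTerms p = (1 - s.nu p)⁻¹ :=
    one_add_selbergTerms_of_prime (Nat.prime_of_mem_primeFactors hp)
      (Nat.dvd_of_mem_primeFactors hp)
  rw [← prod_congr rfl one_add_eq]
  refine (half_prod_one_add_le_sum_divisors_le_pow selbergTerms_isMultiplicative
    s.prodPrimes_squarefree hz hsz
    (fun p hp => (selbergTerms_pos (Nat.dvd_of_mem_primeFactors hp)).le)
    fun p hp => (add_le_add_iff_left 1).1 ((one_add_eq p hp).trans_le (hκ p hp))).trans ?_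
  refine sum_le_sum_of_subset_of_nonneg (fun d hd => ?_)
    fun d hd _ => (selbergTerms_pos_of_mem_selbergSupport hd).le
  obtain ⟨hd, hdz⟩ := mem_filter.1 hd
  exact mem_selbergSupport.2 ⟨Nat.dvd_of_mem_divisors hd, le_trans (by gcongr) hlevel⟩

end SelbergSumLowerBound

section ShiftedPairs

/-- The product `n (n + l)`, which is coprime to a modulus exactly when `n` and `n + l` both are. -/
def shiftProduct (l n : ℕ) : ℕ :=
  n * (n + l)

theorem preservesModEq_shiftProduct (l : ℕ) : PreservesModEq (shiftProduct l) :=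
  fun _ _ _ h => h.mul (h.add_right l)

theorem rootCount_shiftProduct {p : ℕ} (hp : p.Prime) (l : ℕ) :
    rootCount (shiftProduct l) p = if p ∣ l then 1 else 2 := by
  have dvd_iff_eq_zero {r : ℕ} (hr : r < p) : p ∣ r ↔ r = 0 :=
    ⟨fun h => Nat.eq_zero_of_dvd_of_lt h hr, fun h => h ▸ dvd_zero p⟩
  have mod_lt : l % p < p := Nat.mod_lt l hp.pos
  split_ifs with hpl
  · refine card_eq_one.2 ⟨0, ?_⟩
    ext r
    simp only [mem_filter, mem_range, mem_singleton, shiftProduct, hp.dvd_mul,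
      Nat.dvd_add_left hpl, or_self]
    constructor
    · exact fun h => (dvd_iff_eq_zero h.1).1 h.2
    · rintro rfl
      exact ⟨hp.pos, dvd_zero p⟩
  · have mod_pos : 0 < l % p := Nat.pos_of_ne_zero fun h => hpl (Nat.dvd_of_mod_eq_zero h)
    have dvd_add_iff {r : ℕ} (hr : r < p) : p ∣ r + l ↔ r = p - l % p := by
      rw [Nat.dvd_iff_mod_eq_zero, ← Nat.add_mod_mod, ← Nat.dvd_iff_mod_eq_zero]
      constructor
      · rintro ⟨k, hk⟩
        have hk1 : k = 1 := by
          have : 0 < k := Nat.pos_of_ne_zero fun h => by simp [h] at hk; omega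
          have : k < 2 := Nat.lt_of_mul_lt_mul_left (a := p) (by omega)
          omega
        rw [hk1] at hk
        omega
      · rintro rfl
        rw [Nat.sub_add_cancel mod_lt.le]
    refine card_eq_two.2 ⟨0, p - l % p, (Nat.sub_pos_of_lt mod_lt).ne, ?_⟩
    ext r
    simp only [mem_filter, mem_range, mem_insert, mem_singleton, shiftProduct, hp.dvd_mul]
    constructor
    · exact fun h => h.2.imp (dvd_iff_eq_zero h.1).1 (dvd_add_iff h.1).1
    · intro h
      have hr : r < p := by
        rcases h with rfl | rfl
        exacts [hp.pos, Nat.sub_lt hp.pos mod_pos]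
      exact ⟨hr, h.imp (dvd_iff_eq_zero hr).2 (dvd_add_iff hr).2⟩

theorem rootCount_shiftProduct_mem_Icc {p : ℕ} (hp : p.Prime) (l : ℕ) :
    rootCount (shiftProduct l) p ∈ Icc 1 2 := by
  rw [rootCount_shiftProduct hp]
  split_ifs <;> simp

theorem inv_one_sub_rootDensity_shiftProduct_le {p : ℕ} (hp : p.Prime) (hp3 : 3 ≤ p) (l : ℕ) :
    (1 - rootDensity (shiftProduct l) p)⁻¹ ≤ 1 + (6 : ℕ) / p := by
  have hp3' : (3 : ℝ) ≤ p := mod_cast hp3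
  have hcount : (rootCount (shiftProduct l) p : ℝ) ≤ 2 :=
    mod_cast (mem_Icc.1 (rootCount_shiftProduct_mem_Icc hp l)).2
  rw [rootDensity_apply, one_sub_div (by positivity), inv_div, div_le_iff₀ (by linarith)]
  field_simp
  push_cast
  nlinarith

theorem sq_one_add_inv_le {p : ℕ} (hp : p.Prime) (hp3 : 3 ≤ p) (l : ℕ) :
    (1 + (p : ℝ)⁻¹) ^ 2 ≤ (1 - rootDensity (shiftProduct l) p)⁻¹ *
      if p ∣ l then 1 + (p : ℝ)⁻¹ else 1 := by
  have hp3' : (3 : ℝ) ≤ p := mod_cast hp3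
  rw [rootDensity_apply, rootCount_shiftProduct hp]
  split_ifs
  · rw [sq]
    gcongr
    push_cast
    rw [one_sub_div (by positivity), inv_div, le_div_iff₀ (by linarith)]
    field_simp
    linarith
  · push_cast
    rw [mul_one, one_sub_div (by positivity), inv_div, le_div_iff₀ (by linarith)]
    field_simp
    nlinarith

theorem sq_prod_one_add_inv_le {P : ℕ} (hP : ∀ p ∈ P.primeFactors, 3 ≤ p) {l : ℕ} (hl : l ≠ 0) :
    (∏ p ∈ P.primeFactors, (1 + (p : ℝ)⁻¹)) ^ 2 ≤
      (∏ p ∈ P.primeFactors, (1 - rootDensity (shiftProduct l) p)⁻¹) *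
        ∏ p ∈ l.primeFactors, (1 + (p : ℝ)⁻¹) := by
  have density_le_one (p : ℕ) : rootDensity (shiftProduct l) p ≤ 1 :=
    div_le_one_of_le₀ (Nat.cast_le.2 (rootCount_le p)) (Nat.cast_nonneg p)
  calc (∏ p ∈ P.primeFactors, (1 + (p : ℝ)⁻¹)) ^ 2
      = ∏ p ∈ P.primeFactors, (1 + (p : ℝ)⁻¹) ^ 2 := (prod_pow _ _ _).symm
    _ ≤ ∏ p ∈ P.primeFactors, (1 - rootDensity (shiftProduct l) p)⁻¹ *
          if p ∣ l then 1 + (p : ℝ)⁻¹ else 1 :=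
        prod_le_prod (fun p _ => by positivity) fun p hp =>
          sq_one_add_inv_le (Nat.prime_of_mem_primeFactors hp) (hP p hp) l
    _ = (∏ p ∈ P.primeFactors, (1 - rootDensity (shiftProduct l) p)⁻¹) *
          ∏ p ∈ P.primeFactors with p ∣ l, (1 + (p : ℝ)⁻¹) := by
        rw [prod_mul_distrib, ← prod_filter]
    _ ≤ (∏ p ∈ P.primeFactors, (1 - rootDensity (shiftProduct l) p)⁻¹) *
          ∏ p ∈ l.primeFactors, (1 + (p : ℝ)⁻¹) := by
        refine mul_le_mul_of_nonneg_left (prod_le_prod_of_subset_of_one_le (fun p hp => ?_)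
          (fun p _ => by positivity) fun p _ _ => le_add_of_nonneg_right (by positivity))
          (prod_nonneg fun p _ => inv_nonneg.2 (sub_nonneg.2 (density_le_one p)))
        obtain ⟨hp, hpl⟩ := mem_filter.1 hp
        exact Nat.mem_primeFactors.2 ⟨Nat.prime_of_mem_primeFactors hp, hpl, hl⟩

theorem card_Ioc_coprime_shiftProduct_le {P : ℕ} (hP : Squarefree P) {z : ℝ} (hz : 2 ≤ z)
    (hPz : ∀ p ∈ P.primeFactors, 3 ≤ p ∧ (p : ℝ) ≤ z) {l : ℕ} (hl : l ≠ 0) {a b : ℕ}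
    (hab : a ≤ b) :
    (#{n ∈ Ioc a b | P.Coprime (shiftProduct l n)} : ℝ) ≤
      2 * (b - a) * (∏ p ∈ l.primeFactors, (1 + (p : ℝ)⁻¹)) /
        (∏ p ∈ P.primeFactors, (1 + (p : ℝ)⁻¹)) ^ 2 + z ^ 148 := by
  have hroot (p : ℕ) (hp : p.Prime) (hpP : p ∣ P) :
      0 < rootCount (shiftProduct l) p ∧ rootCount (shiftProduct l) p < p := by
    have count := mem_Icc.1 (rootCount_shiftProduct_mem_Icc hp l)
    have hp3 := (hPz p (Nat.mem_primeFactors.2 ⟨hp, hpP, hP.ne_zero⟩)).1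
    omega
  have hy : 1 ≤ (z ^ 37) ^ 2 := one_le_pow₀ (one_le_pow₀ (by linarith))
  have sieve := (preservesModEq_shiftProduct l).card_Ioc_coprime_le hP hroot hab hy
  set s := valueSieve (preservesModEq_shiftProduct l) hP hroot a b hy
  have selbergSum_ge :
      (∏ p ∈ P.primeFactors, (1 - rootDensity (shiftProduct l) p)⁻¹) / 2 ≤ selbergSum s :=
    half_prod_inv_one_sub_nu_le_selbergSum (s := s) (κ := 6) hz (fun p hp => (hPz p hp).2)
      (fun p hp => inv_one_sub_rootDensity_shiftProduct_le (Nat.prime_of_mem_primeFactors hp)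
        (hPz p hp).1 l) le_rfl
  have sq_prod_le := sq_prod_one_add_inv_le (fun p hp => (hPz p hp).1) hl
  set W := ∏ p ∈ l.primeFactors, (1 + (p : ℝ)⁻¹)
  set V := ∏ p ∈ P.primeFactors, (1 + (p : ℝ)⁻¹)
  have hW : 0 ≤ W := prod_nonneg fun p _ => by positivity
  have hV : 0 < V := prod_pos fun p _ => by positivity
  have sq_le : V ^ 2 ≤ 2 * W * selbergSum s := by
    linarith [mul_le_mul_of_nonneg_right selbergSum_ge hW]
  refine sieve.trans (add_le_add ?_ (by ring_nf; rfl))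
  rw [div_le_div_iff₀ selbergSum_pos (pow_pos hV 2)]
  have hab' : (0 : ℝ) ≤ b - a := sub_nonneg.2 (Nat.cast_le.2 hab)
  calc (b - a : ℝ) * V ^ 2 ≤ (b - a) * (2 * W * selbergSum s) :=
        mul_le_mul_of_nonneg_left sq_le hab'
    _ = 2 * (b - a) * W * selbergSum s := by ring

end ShiftedPairs

section NoPrimeFactorIn

/-- The natural number `n` has no prime factor in the real interval `[P, Q]`. -/
def NoPrimeFactorIn (P Q : ℝ) (n : ℕ) : Prop :=
  ∀ p : ℕ, p.Prime → P ≤ p → p ≤ Q → ¬p ∣ n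

theorem NoPrimeFactorIn.anti {P Q z : ℝ} {n : ℕ} (h : NoPrimeFactorIn P Q n) (hz : z ≤ Q) :
    NoPrimeFactorIn P z n :=
  fun p hp hPp hpz => h p hp hPp (hpz.trans hz)

theorem NoPrimeFactorIn.coprime_prod {P z : ℝ} {n : ℕ} (h : NoPrimeFactorIn P z n) (hz : 0 ≤ z) :
    (∏ p ∈ ⌊z⌋₊.primesLE with P ≤ ((p : ℕ) : ℝ), p).Coprime n := by
  refine Nat.Coprime.prod_left fun p hp => ?_
  obtain ⟨hp, hPp⟩ := mem_filter.1 hp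
  obtain ⟨hpz, hp⟩ := Nat.mem_primesLE.1 hp
  exact (Nat.Prime.coprime_iff_not_dvd hp).2 (h p hp hPp ((Nat.le_floor_iff hz).1 hpz))

theorem card_Ioc_noPrimeFactorIn_pair_le {P z : ℝ} (hP : 3 ≤ P) (hz : 2 ≤ z) {l : ℕ} (hl : l ≠ 0)
    {a b : ℕ} (hab : a ≤ b) :
    (#{n ∈ Ioc a b | NoPrimeFactorIn P z n ∧ NoPrimeFactorIn P z (n + l)} : ℝ) ≤
      2 * (b - a) * (34 * (Real.log P / Real.log z)) ^ 2 * (∏ p ∈ l.primeFactors, (1 + (p : ℝ)⁻¹)) +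
        z ^ 148 := by
  set S := {p ∈ ⌊z⌋₊.primesLE | P ≤ ((p : ℕ) : ℝ)}
  have mem_S {p : ℕ} (hp : p ∈ S) : p.Prime ∧ 3 ≤ p ∧ (p : ℝ) ≤ z := by
    obtain ⟨hp, hPp⟩ := mem_filter.1 hp
    obtain ⟨hpz, hp⟩ := Nat.mem_primesLE.1 hp
    exact ⟨hp, mod_cast hP.trans hPp, (Nat.le_floor_iff (by linarith)).1 hpz⟩
  have primeFactors_eq : (∏ p ∈ S, p).primeFactors = S :=
    Nat.primeFactors_prod fun p hp => (mem_S hp).1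
  have squarefree : Squarefree (∏ p ∈ S, p) :=
    (squarefree_primorial ⌊z⌋₊).squarefree_of_dvd
      (prod_dvd_prod_of_subset _ _ _ (filter_subset _ _))
  have sieve := card_Ioc_coprime_shiftProduct_le squarefree hz
    (fun p hp => (mem_S (primeFactors_eq ▸ hp)).2) hl hab
  rw [primeFactors_eq] at sieve
  have subset : {n ∈ Ioc a b | NoPrimeFactorIn P z n ∧ NoPrimeFactorIn P z (n + l)} ⊆
      {n ∈ Ioc a b | (∏ p ∈ S, p).Coprime (shiftProduct l n)} :=
    monotone_filter_right _ fun n _ hn =>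
      (hn.1.coprime_prod (by linarith)).mul_right (hn.2.coprime_prod (by linarith))
  have hlogz : 0 < Real.log z := Real.log_pos (by linarith)
  have prod_pos : 0 < ∏ p ∈ S, (1 + (p : ℝ)⁻¹) := prod_pos fun p _ => by positivity
  have inv_prod_le : (∏ p ∈ S, (1 + (p : ℝ)⁻¹))⁻¹ ≤ 34 * (Real.log P / Real.log z) := by
    rw [inv_le_iff_one_le_mul₀ prod_pos, ← mul_div_assoc, div_mul_eq_mul_div, one_le_div hlogz]
    exact log_le_mul_log_mul_prod_primes_ge (by linarith) (by linarith)
  refine (Nat.cast_le.2 (card_le_card subset)).trans (sieve.trans (add_le_add_left ?_ _))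
  rw [div_eq_mul_inv, ← inv_pow, mul_right_comm]
  have hab' : (0 : ℝ) ≤ b - a := sub_nonneg.2 (Nat.cast_le.2 hab)
  gcongr

theorem sum_card_Ioc_noPrimeFactorIn_pair_le {P z : ℝ} (hP : 3 ≤ P) (hz : 2 ≤ z) {a b : ℕ}
    (hab : a ≤ b) (h : ℕ) :
    ∑ l ∈ Icc 1 h, (#{n ∈ Ioc a b | NoPrimeFactorIn P z n ∧ NoPrimeFactorIn P z (n + l)} : ℝ) ≤
      h * (4 * (b - a) * (34 * (Real.log P / Real.log z)) ^ 2 + z ^ 148) := by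
  have hab' : (0 : ℝ) ≤ b - a := sub_nonneg.2 (Nat.cast_le.2 hab)
  calc _ ≤ ∑ l ∈ Icc 1 h, (2 * (b - a) * (34 * (Real.log P / Real.log z)) ^ 2 *
          (∏ p ∈ l.primeFactors, (1 + (p : ℝ)⁻¹)) + z ^ 148) :=
        sum_le_sum fun l hl => card_Ioc_noPrimeFactorIn_pair_le hP hz
          (Nat.one_le_iff_ne_zero.1 (mem_Icc.1 hl).1) hab
    _ = 2 * (b - a) * (34 * (Real.log P / Real.log z)) ^ 2 *
          (∑ l ∈ Icc 1 h, ∏ p ∈ l.primeFactors, (1 + (p : ℝ)⁻¹)) + h * z ^ 148 := by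
        simp [sum_add_distrib, mul_sum]
    _ ≤ 2 * (b - a) * (34 * (Real.log P / Real.log z)) ^ 2 * (2 * h) + h * z ^ 148 := by
        gcongr
        exact sum_prod_primeFactors_one_add_inv_le h
    _ = h * (4 * (b - a) * (34 * (Real.log P / Real.log z)) ^ 2 + z ^ 148) := by ring

end NoPrimeFactorIn

section SiftingLimit

theorem sqrt_le_mul_div_sq_log {x : ℝ} (hx : 1 < x) : √x ≤ 16 * x / Real.log x ^ 2 := by
  have hx0 : 0 ≤ x := by linarith
  have hlog : 0 < Real.log x := Real.log_pos hx
  have sq_log_le : Real.log x ^ 2 ≤ 16 * √x :=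
    calc Real.log x ^ 2 ≤ (x ^ (1 / 4 : ℝ) / (1 / 4)) ^ 2 := by
          gcongr
          exact Real.log_le_rpow_div hx0 (by norm_num)
      _ = 16 * √x := by
          rw [div_pow, ← Real.rpow_natCast, ← Real.rpow_mul hx0, Real.sqrt_eq_rpow]
          norm_num
          ring
  rw [le_div_iff₀ (by positivity)]
  calc √x * Real.log x ^ 2 ≤ √x * (16 * √x) := by gcongr
    _ = 16 * x := by rw [mul_left_comm, Real.mul_self_sqrt hx0]

theorem exists_log_le_mul_log_and_pow_le_sqrt {Q : ℝ} (hQ : 2 ≤ Q) {k : ℕ} (hk : k ≠ 0) :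
    ∃ z, 2 ≤ z ∧ z ≤ Q ∧ Real.log Q ≤ 2 * k * Real.log z ∧ z ^ k ≤ 2 ^ k * √Q := by
  have hQ0 : 0 < Q := by linarith
  have hk1 : (1 : ℝ) ≤ k := mod_cast Nat.one_le_iff_ne_zero.2 hk
  set w := Q ^ (2 * k : ℝ)⁻¹
  have one_le_w : 1 ≤ w := Real.one_le_rpow (by linarith) (by positivity)
  have w_le : w ≤ Q :=
    Real.rpow_le_self_of_one_le (by linarith) (inv_le_one_of_one_le₀ (by linarith))
  refine ⟨max 2 w, le_max_left _ _, max_le hQ w_le, ?_, ?_⟩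
  · calc Real.log Q = 2 * k * Real.log w := by
          rw [Real.log_rpow hQ0]
          field_simp
      _ ≤ 2 * k * Real.log (max 2 w) := by
          gcongr
          exact le_max_right _ _
  · calc max 2 w ^ k ≤ (2 * w) ^ k := by
          gcongr
          exact max_le (by linarith) (by linarith)
      _ = 2 ^ k * √Q := by
          rw [mul_pow, ← Real.rpow_natCast w, ← Real.rpow_mul hQ0.le, Real.sqrt_eq_rpow]
          congr 2
          field_simp

theorem exists_log_ratio_le_and_pow_le {P Q : ℝ} (hP : 3 ≤ P) (hPQ : P ≤ Q) {k : ℕ} (hk : k ≠ 0) :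
    ∃ z, 2 ≤ z ∧ z ≤ Q ∧ Real.log P / Real.log z ≤ 2 * k * (Real.log P / Real.log Q) ∧
      z ^ k ≤ 2 ^ (k + 4) * Q * (Real.log P / Real.log Q) ^ 2 := by
  obtain ⟨z, hz, hzQ, log_le, pow_le⟩ :=
    exists_log_le_mul_log_and_pow_le_sqrt (by linarith : 2 ≤ Q) hk
  have one_le_log : 1 ≤ Real.log P :=
    (Real.le_log_iff_exp_le (by linarith)).2 (Real.exp_one_lt_three.le.trans hP)
  have logz_pos : 0 < Real.log z := Real.log_pos (by linarith)
  have logQ_pos : 0 < Real.log Q := Real.log_pos (by linarith)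
  have hQ : 0 ≤ Q := by linarith
  refine ⟨z, hz, hzQ, ?_, ?_⟩
  · rw [← mul_div_assoc, div_le_div_iff₀ logz_pos logQ_pos]
    linarith [mul_le_mul_of_nonneg_left log_le (zero_le_one.trans one_le_log)]
  · calc z ^ k ≤ 2 ^ k * √Q := pow_le
      _ ≤ 2 ^ k * (16 * Q / Real.log Q ^ 2) := by
          gcongr
          exact sqrt_le_mul_div_sq_log (by linarith)
      _ = 2 ^ (k + 4) * Q * (1 / Real.log Q) ^ 2 := by ring
      _ ≤ 2 ^ (k + 4) * Q * (Real.log P / Real.log Q) ^ 2 := by gcongr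

theorem exists_Icc_ceil_floor_subset_Ioc {X : ℝ} (hX : 1 ≤ X) :
    ∃ a b : ℕ, a ≤ b ∧ (b - a : ℝ) ≤ 2 * X ∧ Icc ⌈X⌉₊ ⌊2 * X⌋₊ ⊆ Ioc a b := by
  have ceil_pos : 1 ≤ ⌈X⌉₊ := Nat.ceil_pos.2 (by linarith)
  have pred_lt : ((⌈X⌉₊ - 1 : ℕ) : ℝ) < X := by
    rw [Nat.cast_sub ceil_pos, Nat.cast_one]
    linarith [Nat.ceil_lt_add_one (show 0 ≤ X by linarith)]
  refine ⟨⌈X⌉₊ - 1, ⌊2 * X⌋₊, Nat.le_floor (by linarith), ?_, fun n hn => ?_⟩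
  · rw [Nat.cast_sub ceil_pos, Nat.cast_one]
    linarith [Nat.floor_le (show 0 ≤ 2 * X by linarith), Nat.le_ceil X]
  · rw [mem_Icc] at hn
    rw [mem_Ioc]
    omega

end SiftingLimit

theorem stmt_5_general :
    ∃ C : ℝ, ∀ X P Q : ℝ, ∀ h : ℕ, 3 ≤ P → P ≤ Q → Q ≤ X →
      ∑ l ∈ Finset.Icc 1 h,
        (((Finset.Icc ⌈X⌉₊ ⌊2 * X⌋₊).filter (fun n =>
            (∀ p : ℕ, p.Prime → P ≤ (p : ℝ) → (p : ℝ) ≤ Q → ¬ p ∣ n) ∧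
            (∀ p : ℕ, p.Prime → P ≤ (p : ℝ) → (p : ℝ) ≤ Q → ¬ p ∣ (n + l)))).card : ℝ)
        ≤ C * h * X * (Real.log P / Real.log Q) ^ 2 := by
  refine ⟨8 * (34 * 296) ^ 2 + 2 ^ 152, fun X P Q h hP hPQ hQX => ?_⟩
  obtain ⟨z, hz, hzQ, ratio_le, pow_le⟩ :=
    exists_log_ratio_le_and_pow_le hP hPQ (by norm_num : 148 ≠ 0)
  obtain ⟨a, b, hab, length_le, subset⟩ := exists_Icc_ceil_floor_subset_Ioc (by linarith : 1 ≤ X)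
  have ratio_nonneg : 0 ≤ Real.log P / Real.log z :=
    div_nonneg (Real.log_nonneg (by linarith)) (Real.log_nonneg (by linarith))
  calc _ ≤ ∑ l ∈ Icc 1 h,
          (#{n ∈ Ioc a b | NoPrimeFactorIn P z n ∧ NoPrimeFactorIn P z (n + l)} : ℝ) := by
        refine sum_le_sum fun l _ => Nat.cast_le.2 (card_le_card fun n hn => ?_)
        obtain ⟨hn, hn₁, hn₂⟩ := mem_filter.1 hn
        exact mem_filter.2 ⟨subset hn, NoPrimeFactorIn.anti hn₁ hzQ, NoPrimeFactorIn.anti hn₂ hzQ⟩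
    _ ≤ h * (4 * (b - a) * (34 * (Real.log P / Real.log z)) ^ 2 + z ^ 148) :=
        sum_card_Ioc_noPrimeFactorIn_pair_le hP hz hab h
    _ ≤ h * (4 * (2 * X) * (34 * (2 * (148 : ℕ) * (Real.log P / Real.log Q))) ^ 2 +
          2 ^ (148 + 4) * X * (Real.log P / Real.log Q) ^ 2) := by
        have hX : 0 ≤ X := by linarith
        gcongr
        exact pow_le.trans (by gcongr)
    _ = (8 * (34 * 296) ^ 2 + 2 ^ 152) * h * X * (Real.log P / Real.log Q) ^ 2 := by
        push_cast
        ring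

theorem stmt_5 :
    ∃ C : ℝ, ∀ X P Q : ℝ, ∀ h : ℕ, 3 ≤ P → P ≤ Q → Q ≤ X → 1 ≤ h → (h : ℝ) ≤ X →
      ∑ l ∈ Finset.Icc 1 h,
        (((Finset.Icc ⌈X⌉₊ ⌊2 * X⌋₊).filter (fun n =>
            (∀ p : ℕ, p.Prime → P ≤ (p : ℝ) → (p : ℝ) ≤ Q → ¬ p ∣ n) ∧
            (∀ p : ℕ, p.Prime → P ≤ (p : ℝ) → (p : ℝ) ≤ Q → ¬ p ∣ (n + l)))).card : ℝ)
        ≤ C * h * X * (Real.log P / Real.log Q) ^ 2 := by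
  obtain ⟨C, hC⟩ := stmt_5_general
  exact ⟨C, fun X P Q h hP hPQ hQX _ _ => hC X P Q h hP hPQ hQX⟩
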